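/- arXiv:2307.14494 — 3 statements merged into one kernel-verified Lean document; each statement's English description precedes it below -/
import Mathlib

section
/- Let m, n be natural numbers with 1 ≤ n ≤ m - 1, let z = (z_1, ..., z_m) and w = (w_1, ..., w_m) be vectors in ℂ^m, and let Z = diag(z_1, ..., z_m). Suppose q_0, q_1, ..., q_n ∈ ℂ^m and scalars α_1, ..., α_n ∈ ℂ and β_1, ..., β_n ∈ ℂ satisfy: (i) [q_j, q_j]_w = 1 for all 0 ≤ j ≤ n; (ii) α_{j+1} = [q_j, Z q_j]_w for all 0 ≤ j ≤ n-1; (iii) the three-term recurrence Z q_j = β_j q_{j-1} + α_{j+1} q_j + β_{j+1} q_{j+1} holds for all 0 ≤ j ≤ n-1, with the conventions q_{-1} = 0 and β_0 = 0; and (iv) β_j ≠ 0 for all 1 ≤ j ≤ n. Then the vectors are complex orthogonal: [q_i, q_j]_w = 0 for all 0 ≤ i, j ≤ n with i ≠ j. -/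
open Matrix BigOperators

/-- Complex-orthogonality of vectors produced by the complex
orthogonalization process with respect to the bilinear form
`[u, v]_w = ∑ i, w i * u i * v i`. The conventions `q_{-1} = 0` and `β_0 = 0`
are encoded via truncated subtraction on `ℕ` together with `β 0 = 0`. -/
theorem complex_orthogonalization_orthogonal
    (m n : ℕ) (hn : 1 ≤ n) (hnm : n ≤ m - 1)
    (z w : Fin m → ℂ) (q : ℕ → Fin m → ℂ) (α β : ℕ → ℂ)
    (hβ0 : β 0 = 0)
    (hnorm : ∀ j, j ≤ n → ∑ i, w i * q j i * q j i = 1)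
    (hα : ∀ j, j + 1 ≤ n →
      α (j + 1) = ∑ i, w i * q j i * ((Matrix.diagonal z *ᵥ q j) i))
    (hrec : ∀ j, j + 1 ≤ n →
      Matrix.diagonal z *ᵥ q j
        = β j • q (j - 1) + α (j + 1) • q j + β (j + 1) • q (j + 1))
    (hβ : ∀ j, 1 ≤ j → j ≤ n → β j ≠ 0) :
    ∀ i, i ≤ n → ∀ j, j ≤ n → i ≠ j → ∑ k, w k * q i k * q j k = 0 := by
  obtain ⟨B, hB⟩ : ∃ B : ℕ → ℕ → ℂ, ∀ i j, B i j = ∑ k, w k * q i k * q j k :=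
    ⟨_, fun _ _ => rfl⟩
  obtain ⟨T, hT⟩ : ∃ T : ℕ → ℕ → ℂ,
      ∀ i j, T i j = ∑ k, w k * q i k * ((Matrix.diagonal z *ᵥ q j) k) :=
    ⟨_, fun _ _ => rfl⟩
  have Bs : ∀ i j, B i j = B j i := by
    intro i j
    rw [hB, hB]
    exact Finset.sum_congr rfl fun k _ => by ring
  have Ts : ∀ i j, T i j = T j i := by
    intro i j
    rw [hT, hT]
    refine Finset.sum_congr rfl fun k _ => ?_
    rw [Matrix.mulVec_diagonal, Matrix.mulVec_diagonal]
    ring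
  have Tr : ∀ i j, j + 1 ≤ n →
      T i j = β j * B i (j - 1) + α (j + 1) * B i j + β (j + 1) * B i (j + 1) := by
    intro i j hj
    rw [hT, hrec j hj, hB, hB, hB, Finset.mul_sum, Finset.mul_sum, Finset.mul_sum,
      ← Finset.sum_add_distrib, ← Finset.sum_add_distrib]
    refine Finset.sum_congr rfl fun k _ => ?_
    simp only [Pi.add_apply, Pi.smul_apply, smul_eq_mul]
    ring
  have Bn : ∀ j, j ≤ n → B j j = 1 := fun j hj => by rw [hB, hnorm j hj]
  have Ta : ∀ j, j + 1 ≤ n → T j j = α (j + 1) := fun j hj => by rw [hT, hα j hj]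
  have key : ∀ k, k ≤ n → ∀ j, j ≤ k → ∀ i, i < j → B i j = 0 := by
    intro k
    induction k with
    | zero => intro _ j hj i hi; omega
    | succ k ih =>
      intro hk j hj i hi
      have ih' := ih (by omega)
      rcases Nat.lt_or_ge j (k + 1) with h | h
      · exact ih' j (by omega) i hi
      obtain rfl : j = k + 1 := by omega
      have hb := hβ (k + 1) (by omega) hk
      refine (mul_eq_zero.mp ?_).resolve_left hb
      have h1 := Tr i k hk
      rcases Nat.lt_or_ge i k with hik | hik
      · have h2 := Tr k i (by omega)
        rw [Ts k i, Bs k (i - 1), Bs k i, ih' k le_rfl (i - 1) (by omega),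
          ih' k le_rfl i hik] at h2
        rw [ih' k le_rfl i hik] at h1
        rcases Nat.lt_or_ge (i + 1) k with h3 | h3
        · rw [Bs k (i + 1), ih' k le_rfl (i + 1) h3] at h2
          rw [ih' (k - 1) (by omega) i (by omega)] at h1
          linear_combination h2 - h1
        · obtain rfl : k = i + 1 := by omega
          rw [Bn (i + 1) (by omega)] at h2
          rw [Nat.add_sub_cancel, Bn i (by omega)] at h1
          linear_combination h2 - h1
      · obtain rfl : i = k := by omega
        rw [Ta i hk, Bn i (by omega)] at h1
        have h0 : β i * B i (i - 1) = 0 := by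
          rcases Nat.eq_zero_or_pos i with h | h
          · rw [h, hβ0, zero_mul]
          · rw [Bs, ih' i le_rfl (i - 1) (by omega), mul_zero]
        linear_combination -h1 - h0
  intro i hi j hj hij
  rw [← hB]
  rcases Nat.lt_or_gt_of_ne hij with h | h
  · exact key j hj j le_rfl i h
  · rw [Bs]
    exact key i hi i le_rfl j h
end

section
/- Let n ≥ 1, α_1, ..., α_n ∈ ℂ, β_1, ..., β_n ∈ ℂ with β_j ≠ 0 for all j, and let P_0, P_1, ..., P_n ∈ ℂ[z] satisfy P_0 = k for a nonzero constant k ∈ ℂ and the three-term recurrence z·P_j(z) = β_j P_{j-1}(z) + α_{j+1} P_j(z) + β_{j+1} P_{j+1}(z) for 0 ≤ j ≤ n-1, with the conventions P_{-1} = 0 and β_0 = 0. Let c_0, ..., c_n ∈ ℂ with c_n ≠ 0, let p(z) = Σ_{j=0}^n c_j P_j(z), and let C = A + e_n q^T be the generalized colleague matrix. If λ ∈ ℂ is an eigenvalue of C (i.e. there exists a nonzero v ∈ ℂ^n with C v = λ v), then p(λ) = 0. -/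
open Matrix BigOperators

theorem colleague_row_sum (n : ℕ) (α β w : ℕ → ℂ) (hβ0 : β 0 = 0) (i : ℕ) (hi : i < n) :
    ∑ j ∈ Finset.range n, (if i = j then α (i + 1)
      else if i + 1 = j then β (i + 1)
      else if j + 1 = i then β (j + 1) else 0) * w j
    = β i * w (i - 1) + α (i + 1) * w i + (if i + 1 < n then β (i + 1) * w (i + 1) else 0) := by
  have h : ∀ j ∈ Finset.range n, (if i = j then α (i + 1)
      else if i + 1 = j then β (i + 1)
      else if j + 1 = i then β (j + 1) else 0) * w j
      = (if i - 1 = j then β i * w (i - 1) else 0) + (if i = j then α (i + 1) * w i else 0)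
        + (if i + 1 = j then β (i + 1) * w (i + 1) else 0) := by
    intro j _
    rcases Nat.eq_zero_or_pos i with h0 | h0
    · subst h0
      by_cases h1 : 0 = j
      · subst h1; simp [hβ0]
      · by_cases h2 : 0 + 1 = j
        · subst h2; simp
        · have h5 : ¬ 1 = j := by omega
          simp [h1, h5]
    · obtain ⟨m, rfl⟩ : ∃ m, i = m + 1 := ⟨i - 1, by omega⟩
      by_cases h1 : m + 1 = j
      · subst h1; simp
      · by_cases h2 : m + 1 + 1 = j
        · subst h2; simp; omega
        · by_cases h3 : m = j
          · subst h3; simp [h2]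
          · have h4 : ¬ j = m := fun h => h3 h.symm
            simp [h1, h2, h3, h4]
  rw [Finset.sum_congr rfl h, Finset.sum_add_distrib, Finset.sum_add_distrib,
    Finset.sum_ite_eq, Finset.sum_ite_eq, Finset.sum_ite_eq]
  simp only [Finset.mem_range]
  rw [if_pos hi, if_pos (show i - 1 < n by omega)]

/-- Every eigenvalue of the generalized colleague matrix
`C = A + e_n qᵀ` is a root of `p = ∑ c_j P_j`. -/
theorem colleague_matrix_eigenvalue_is_root
    (n : ℕ) (hn : 1 ≤ n) (α β : ℕ → ℂ) (hβ0 : β 0 = 0)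
    (hβ : ∀ j, 1 ≤ j → j ≤ n → β j ≠ 0)
    (P : ℕ → Polynomial ℂ) (k : ℂ) (hk : k ≠ 0) (hP0 : P 0 = Polynomial.C k)
    (hrec : ∀ j, j + 1 ≤ n →
      Polynomial.X * P j
        = Polynomial.C (β j) * P (j - 1) + Polynomial.C (α (j + 1)) * P j
          + Polynomial.C (β (j + 1)) * P (j + 1))
    (c : ℕ → ℂ) (hc : c n ≠ 0)
    (p : Polynomial ℂ)
    (hp : p = ∑ j ∈ Finset.range (n + 1), Polynomial.C (c j) * P j)
    (A : Matrix (Fin n) (Fin n) ℂ)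
    (hA : A = Matrix.of fun i j : Fin n =>
      if (i : ℕ) = (j : ℕ) then α ((i : ℕ) + 1)
      else if (i : ℕ) + 1 = (j : ℕ) then β ((i : ℕ) + 1)
      else if (j : ℕ) + 1 = (i : ℕ) then β ((j : ℕ) + 1)
      else 0)
    (e : Fin n → ℂ) (he : e = fun i : Fin n => if (i : ℕ) = n - 1 then 1 else 0)
    (qv : Fin n → ℂ) (hqv : qv = fun j : Fin n => -β n * (c (j : ℕ) / c n))
    (Cmat : Matrix (Fin n) (Fin n) ℂ) (hC : Cmat = A + Matrix.vecMulVec e qv)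
    (lam : ℂ) (v : Fin n → ℂ) (hv : v ≠ 0) (heig : Cmat *ᵥ v = lam • v) :
    p.eval lam = 0 := by
  classical
  set S : ℂ := ∑ j : Fin n, c j * v j with hS
  obtain ⟨w, hw⟩ : ∃ w : ℕ → ℂ, w = fun i => if h : i < n then v ⟨i, h⟩ else -S / c n := ⟨_, rfl⟩
  have hwv : ∀ i : Fin n, w i = v i := by intro i; simp [hw]
  have hwn : w n = -S / c n := by simp [hw]
  have hSr : S = ∑ j ∈ Finset.range n, c j * w j := by
    rw [← Fin.sum_univ_eq_sum_range (fun j => c j * w j) n]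
    simp only [hwv, hS]
  have hrow : ∀ i, i < n →
      β i * w (i - 1) + α (i + 1) * w i + β (i + 1) * w (i + 1) = lam * w i := by
    intro i hi
    have h1 := congrFun heig ⟨i, hi⟩
    have h2 := colleague_row_sum n α β w hβ0 i hi
    rw [← Fin.sum_univ_eq_sum_range (fun j => (if i = j then α (i + 1)
      else if i + 1 = j then β (i + 1)
      else if j + 1 = i then β (j + 1) else 0) * w j) n] at h2
    have h3 : (A *ᵥ v) ⟨i, hi⟩ = β i * w (i - 1) + α (i + 1) * w i
        + (if i + 1 < n then β (i + 1) * w (i + 1) else 0) := by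
      rw [← h2, hA]
      simp only [Matrix.mulVec, dotProduct, Matrix.of_apply, hwv]
    have h4 : qv ⬝ᵥ v = β n * w n := by
      rw [hwn, hqv, hS, dotProduct, neg_div, Finset.sum_div, ← Finset.sum_neg_distrib,
        Finset.mul_sum]
      refine Finset.sum_congr rfl fun j _ => ?_
      ring
    have h5 : (Matrix.vecMulVec e qv *ᵥ v) ⟨i, hi⟩ = e ⟨i, hi⟩ * (β n * w n) := by
      rw [← h4]
      simp only [Matrix.mulVec, dotProduct, Matrix.vecMulVec_apply, Finset.mul_sum, mul_assoc]
    rw [hC, Matrix.add_mulVec, Pi.add_apply, h3, h5, he, Pi.smul_apply, smul_eq_mul,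
      ← hwv ⟨i, hi⟩] at h1
    simp only at h1
    rw [← h1]
    by_cases hin : i + 1 = n
    · subst hin; simp
    · rw [if_pos (show i + 1 < n by omega), if_neg (show ¬ i = n - 1 by omega)]
      ring
  have hrecE : ∀ i, i < n → lam * (P i).eval lam = β i * (P (i - 1)).eval lam
      + α (i + 1) * (P i).eval lam + β (i + 1) * (P (i + 1)).eval lam := by
    intro i hi
    simpa using congrArg (Polynomial.eval lam) (hrec i hi)
  have hprop : ∀ i, i ≤ n → k * w i = w 0 * (P i).eval lam := by
    intro i
    induction i using Nat.strong_induction_on with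
    | _ i ih =>
      intro hi
      rcases i with _ | i
      · simp [hP0, mul_comm]
      · have a := ih i (by omega) (by omega)
        have b := ih (i - 1) (by omega) (by omega)
        have r := hrow i (by omega)
        have s := hrecE i (by omega)
        apply mul_left_cancel₀ (hβ (i + 1) (by omega) hi)
        linear_combination k * r + w 0 * s + (lam - α (i + 1)) * a - β i * b
  have hw0 : w 0 ≠ 0 := by
    intro h0
    apply hv
    funext i
    have := hprop i i.2.le
    rw [h0, zero_mul] at this
    rw [← hwv i]
    exact (mul_eq_zero.mp this).resolve_left hk
  have hsum : ∑ j ∈ Finset.range (n + 1), c j * w j = 0 := by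
    rw [Finset.sum_range_succ, ← hSr, hwn]
    field_simp
    ring
  have : w 0 * p.eval lam = 0 := by
    have h6 : w 0 * p.eval lam = k * ∑ j ∈ Finset.range (n + 1), c j * w j := by
      rw [hp, Polynomial.eval_finsetSum, Finset.mul_sum, Finset.mul_sum]
      refine Finset.sum_congr rfl fun j hj => ?_
      have := hprop j (by have := Finset.mem_range.mp hj; omega)
      simp only [Polynomial.eval_mul, Polynomial.eval_C]
      linear_combination -c j * this
    rw [h6, hsum, mul_zero]
  exact (mul_eq_zero.mp this).resolve_left hw0
end

section
/- Let n ≥ 1, α_1, ..., α_n ∈ ℂ, β_1, ..., β_n ∈ ℂ with β_j ≠ 0 for all j, and let P_0, P_1, ..., P_n ∈ ℂ[z] satisfy P_0 = k for a nonzero constant k ∈ ℂ and the three-term recurrence z·P_j(z) = β_j P_{j-1}(z) + α_{j+1} P_j(z) + β_{j+1} P_{j+1}(z) for 0 ≤ j ≤ n-1, with the conventions P_{-1} = 0 and β_0 = 0. Let c_0, ..., c_n ∈ ℂ with c_n ≠ 0, let p(z) = Σ_{j=0}^n c_j P_j(z), and let C = A + e_n q^T be the generalized colleague matrix. Then the characteristic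 polynomial of C satisfies c_n · (k / (β_1 β_2 ⋯ β_n)) · det(z·I − C) = p(z) as polynomials in z; that is, det(z·I − C) is the monic multiple of p. -/
open Matrix BigOperators

/-- The characteristic polynomial `det(z·I − C)` of the generalized
colleague matrix is the monic multiple of `p`:
`c_n · (k / (β_1 ⋯ β_n)) · det(z·I − C) = p`. -/
theorem colleague_matrix_charpoly
    (n : ℕ) (hn : 1 ≤ n) (α β : ℕ → ℂ) (hβ0 : β 0 = 0)
    (hβ : ∀ j, 1 ≤ j → j ≤ n → β j ≠ 0)
    (P : ℕ → Polynomial ℂ) (k : ℂ) (hk : k ≠ 0) (hP0 : P 0 = Polynomial.C k)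
    (hrec : ∀ j, j + 1 ≤ n →
      Polynomial.X * P j
        = Polynomial.C (β j) * P (j - 1) + Polynomial.C (α (j + 1)) * P j
          + Polynomial.C (β (j + 1)) * P (j + 1))
    (c : ℕ → ℂ) (hc : c n ≠ 0)
    (p : Polynomial ℂ)
    (hp : p = ∑ j ∈ Finset.range (n + 1), Polynomial.C (c j) * P j)
    (A : Matrix (Fin n) (Fin n) ℂ)
    (hA : A = Matrix.of fun i j : Fin n =>
      if (i : ℕ) = (j : ℕ) then α ((i : ℕ) + 1)
      else if (i : ℕ) + 1 = (j : ℕ) then β ((i : ℕ) + 1)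
      else if (j : ℕ) + 1 = (i : ℕ) then β ((j : ℕ) + 1)
      else 0)
    (e : Fin n → ℂ) (he : e = fun i : Fin n => if (i : ℕ) = n - 1 then 1 else 0)
    (qv : Fin n → ℂ) (hqv : qv = fun j : Fin n => -β n * (c (j : ℕ) / c n))
    (Cmat : Matrix (Fin n) (Fin n) ℂ) (hC : Cmat = A + Matrix.vecMulVec e qv) :
    Polynomial.C (c n * (k / ∏ j ∈ Finset.Icc 1 n, β j)) * Cmat.charpoly = p := by
  obtain ⟨m, rfl⟩ : ∃ m, n = m + 1 := ⟨n - 1, by omega⟩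
  have entry : ∀ i j : Fin (m + 1), Cmat.charmatrix i j =
      (if (j : ℕ) = i then Polynomial.X - Polynomial.C (α ((i : ℕ) + 1)) else 0)
      - (if (j : ℕ) = i + 1 then Polynomial.C (β ((i : ℕ) + 1)) else 0)
      - (if (j : ℕ) = i - 1 then Polynomial.C (β i) else 0)
      + (if (i : ℕ) = m then Polynomial.C (β (m + 1) * (c j / c (m + 1))) else 0) := by
    intro i j
    have hx : Cmat i j = (if (j : ℕ) = i then α ((i : ℕ) + 1) else 0)
      + (if (j : ℕ) = i + 1 then β ((i : ℕ) + 1) else 0)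
      + (if (j : ℕ) = i - 1 then β i else 0)
      - (if (i : ℕ) = m then β (m + 1) * (c j / c (m + 1)) else 0) := by
      subst hC hA he hqv
      simp only [Matrix.add_apply, Matrix.of_apply, Matrix.vecMulVec_apply,
        Nat.add_sub_cancel]
      have h1 : (if (i : ℕ) = (j : ℕ) then α ((i : ℕ) + 1)
          else if (i : ℕ) + 1 = (j : ℕ) then β ((i : ℕ) + 1)
          else if (j : ℕ) + 1 = (i : ℕ) then β ((j : ℕ) + 1)
          else 0) = (if (j : ℕ) = i then α ((i : ℕ) + 1) else 0)
          + (if (j : ℕ) = i + 1 then β ((i : ℕ) + 1) else 0)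
          + (if (j : ℕ) = i - 1 then β i else 0) := by
        generalize (i : ℕ) = a
        generalize (j : ℕ) = b
        rcases a with _ | a
        · rcases b with _ | b
          · simp [hβ0]
          · by_cases hb : b = 0
            · simp [hb]
            · have : ¬ (0 = b) := fun h => hb h.symm
              simp [hb, this]
        · by_cases h1 : b = a + 1
          · subst h1; simp
          · by_cases h2 : b = a + 2
            · subst h2; simp
            · by_cases h3 : b = a
              · subst h3
                have h4 : ¬ (b + 1 + 1 = b) := by omega
                have h5 : ¬ (b = b + 1 + 1) := by omega
                simp [h4, h5]
              · have h1' : ¬ (a + 1 = b) := fun h => h1 h.symm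
                have h2' : ¬ (a + 1 + 1 = b) := fun h => h2 h.symm
                have h2'' : ¬ (b = a + 1 + 1) := h2
                simp [h1, h1', h2', h2'', h3]
      rw [h1]
      split_ifs <;> ring
    rw [Matrix.charmatrix_apply, hx, Matrix.diagonal_apply]
    have hij : (i = j) ↔ ((j : ℕ) = i) := by rw [Fin.ext_iff]; exact eq_comm
    simp only [hij, Polynomial.C_add, Polynomial.C_sub, apply_ite Polynomial.C, Polynomial.C_0]
    split_ifs <;> ring
  have hv : Cmat.charmatrix *ᵥ (fun j : Fin (m + 1) => P j) =
      fun i => if i = Fin.last m then Polynomial.C (β (m + 1) / c (m + 1)) * p else 0 := by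
    funext i
    have hi : (i : ℕ) < m + 1 := i.2
    have him : (i = Fin.last m) ↔ ((i : ℕ) = m) := by rw [Fin.ext_iff]; simp
    simp only [Matrix.mulVec, dotProduct, entry, him]
    rw [Fin.sum_univ_eq_sum_range (fun j : ℕ =>
      ((if j = i then Polynomial.X - Polynomial.C (α ((i : ℕ) + 1)) else 0)
      - (if j = i + 1 then Polynomial.C (β ((i : ℕ) + 1)) else 0)
      - (if j = i - 1 then Polynomial.C (β i) else 0)
      + (if (i : ℕ) = m then Polynomial.C (β (m + 1) * (c j / c (m + 1))) else 0)) * P j) (m + 1)]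
    generalize (i : ℕ) = a at hi
    have hr := hrec a (by omega)
    simp only [add_mul, sub_mul, ite_mul, zero_mul, Finset.sum_add_distrib,
      Finset.sum_sub_distrib, Finset.sum_ite_eq', Finset.mem_range]
    rw [if_pos hi, if_pos (show a - 1 < m + 1 by omega)]
    by_cases ha : a = m
    · subst ha
      have e1 : Polynomial.C (β (a + 1) / c (a + 1)) * p =
          (∑ j ∈ Finset.range (a + 1),
            Polynomial.C (β (a + 1) * (c j / c (a + 1))) * P j)
          + Polynomial.C (β (a + 1)) * P (a + 1) := by
        rw [hp, Finset.sum_range_succ _ (a + 1), mul_add, Finset.mul_sum]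
        congr 1
        · refine Finset.sum_congr rfl fun j _ => ?_
          rw [← mul_assoc, ← Polynomial.C_mul]
          congr 2
          ring
        · rw [← mul_assoc, ← Polynomial.C_mul, div_mul_cancel₀ _ hc]
      simp only [lt_irrefl, if_true, if_false, e1]
      linear_combination hr
    · rw [if_pos (show a + 1 < m + 1 by omega)]
      simp only [ha, if_false, Finset.sum_const_zero]
      linear_combination hr
  have hadj : Cmat.charmatrix.adjugate 0 (Fin.last m) =
      Polynomial.C (∏ j ∈ Finset.Icc 1 m, β j) := by
    rw [Matrix.adjugate_fin_succ_eq_det_submatrix, Matrix.det_of_lowerTriangular]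
    · have hd : ∀ i : Fin m, Cmat.charmatrix.submatrix (Fin.last m).succAbove
          (Fin.succAbove 0) i i = - Polynomial.C (β ((i : ℕ) + 1)) := by
        intro i
        have := i.2
        have h3 : ¬ ((i : ℕ) + 1 = i - 1) := by omega
        have h4 : ¬ ((i : ℕ) = m) := by omega
        simp [entry, h3, h4]
      rw [Finset.prod_congr rfl fun i _ => hd i, Finset.prod_neg]
      rw [Fin.prod_univ_eq_prod_range (fun i => Polynomial.C (β (i + 1))) m]
      have : ∏ j ∈ Finset.Icc 1 m, β j = ∏ j ∈ Finset.range m, β (j + 1) := by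
        rw [Finset.range_eq_Ico, Finset.prod_Ico_add' β 0 m 1]
        rfl
      rw [this, map_prod, ← mul_assoc]
      simp [← mul_pow]
    · intro i j hij
      have hij' : (i : ℕ) < j := by simpa using hij
      have h1 : ¬ ((j : ℕ) + 1 = i) := by omega
      have h2 : ¬ ((j : ℕ) = i) := by omega
      have h3 : ¬ ((j : ℕ) + 1 = i - 1) := by omega
      have h4 : ¬ ((i : ℕ) = m) := by have := i.2; omega
      simp [entry, h1, h2, h3, h4]
  have key : Cmat.charpoly * Polynomial.C k =
      Polynomial.C (∏ j ∈ Finset.Icc 1 m, β j) *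
        (Polynomial.C (β (m + 1) / c (m + 1)) * p) := by
    have h := congrFun (congrArg (fun w => Cmat.charmatrix.adjugate *ᵥ w) hv) 0
    simp only [Matrix.mulVec_mulVec, Matrix.adjugate_mul, Matrix.smul_mulVec,
      Matrix.one_mulVec, Pi.smul_apply, smul_eq_mul] at h
    rw [Matrix.mulVec, dotProduct] at h
    simp only [mul_ite, mul_zero, Finset.sum_ite_eq', Finset.mem_univ, if_true, hadj,
      Fin.val_zero, hP0] at h
    exact h
  have hprod : ∏ j ∈ Finset.Icc 1 (m + 1), β j = (∏ j ∈ Finset.Icc 1 m, β j) * β (m + 1) :=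
    Finset.prod_Icc_succ_top (by omega) _
  have hne : ∏ j ∈ Finset.Icc 1 (m + 1), β j ≠ 0 := by
    refine Finset.prod_ne_zero_iff.mpr fun j hj => ?_
    rw [Finset.mem_Icc] at hj
    exact hβ j hj.1 hj.2
  set B := ∏ j ∈ Finset.Icc 1 (m + 1), β j with hB
  have e2 : c (m + 1) * (k / B) = c (m + 1) / B * k := by ring
  have e3 : c (m + 1) / B * ((∏ j ∈ Finset.Icc 1 m, β j) * (β (m + 1) / c (m + 1))) = 1 := by
    rw [← mul_div_assoc, ← hprod]
    field_simp
  rw [e2, Polynomial.C_mul, mul_assoc, mul_comm (Polynomial.C k), key, ← mul_assoc (Polynomial.C (∏ j ∈ Finset.Icc 1 m, β j)),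
    ← Polynomial.C_mul, ← mul_assoc, ← Polynomial.C_mul, e3, Polynomial.C_1, one_mul]
end
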